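/- Let 0 < ε < 1/2 and ψ ∈ H^{1−ε}(0, L₀) ∩ H^ε(0, L₀) with ψ(0) = 0 in the trace sense (so that ψ ∈ H₀^ε). Then there is a constant c > 0 independent of ψ such that ψ(L₀)² ≤ c ‖ψ‖_{H^{1−ε}} ‖ψ‖_{H^{ε}} ≤ c ‖ψ‖²_{H^{1−ε}}. -/

import Mathlib

/-!
The proof telescopes over dyadic means. Let `m k` be the mean of `ψ` over `(L - L 2⁻ᵏ, L)`; by
continuity `m k → ψ L`. The increment `m (k+1) - m k` is an average of `ψ x - ψ y` over points at
distance at most `L 2⁻ᵏ`, so by Cauchy–Schwarz it is bounded by a constant times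
`(2⁻ᵏ) ^ (s - 1/2)` times the seminorm of order `s` (`sq_endMean_sub_le`). With `s = 1 - ε` the
bound decays geometrically, with ratio `q = 2 ^ (-(1/2 - ε))`; with `s = ε` it grows with ratio
`q⁻¹`. Using the growing bound up to the index where the two balance and the decaying one after it
gives `|ψ L|² ≤ c ‖ψ‖_{H^{1-ε}} ‖ψ‖_{H^ε}` (`sq_limit_le_of_increments`). The balancing index exists
because the `H^ε` norm is controlled by the `H^{1-ε}` norm on a bounded interval, which also yields
the second inequality.
-/


open MeasureTheory Set

/-- The squared Sobolev–Slobodeckij norm of order `s` on the interval `(0, L)`: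
`‖ψ‖²_{H^s} = ‖ψ‖²_{L²} + ∬ |ψ(x) − ψ(y)|²/|x − y|^{1+2s} dx dy`. -/
noncomputable def sobNormSq (s L : ℝ) (ψ : ℝ → ℝ) : ℝ :=
  (∫ x in (0:ℝ)..L, (ψ x) ^ 2) +
    ∫ p in (Ioo (0:ℝ) L) ×ˢ (Ioo (0:ℝ) L),
      ((ψ p.1 - ψ p.2) ^ 2 / |p.1 - p.2| ^ (1 + 2 * s))

/-! ### Interpolation for sequences -/

/-- Sequence form of real interpolation at the midpoint: if the increments of `m` are bounded both
by `q ^ k * B` and by `(q⁻¹) ^ k * A`, splitting the telescoping sum at the index where the two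
bounds balance controls the limit by the geometric mean of `A` and `B`. -/
lemma sq_limit_le_of_increments {q A B l : ℝ} {m : ℕ → ℝ} (hq0 : 0 < q) (hq1 : q < 1)
    (hA : 0 ≤ A) (hAB : A ≤ B) (h0 : |m 0| ≤ A)
    (hdA : ∀ k, |m (k + 1) - m k| ≤ (q⁻¹) ^ k * A)
    (hdB : ∀ k, |m (k + 1) - m k| ≤ q ^ k * B)
    (hlim : Filter.Tendsto m Filter.atTop (nhds l)) :
    l ^ 2 ≤ 4 / ((1 - q) ^ 2 * q ^ 2) * (A * B) := by
  have hB : 0 ≤ B := hA.trans hAB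
  have h1q : 0 < 1 - q := by linarith
  have hqi : 1 ≤ q⁻¹ := (one_le_inv₀ hq0).2 hq1.le
  have hlow : ∀ N, |m N| ≤ 1 / (1 - q) * ((q⁻¹) ^ N * A) := by
    intro N
    induction N with
    | zero =>
      have : 1 ≤ 1 / (1 - q) := by rw [le_div_iff₀ h1q]; linarith
      simp only [pow_zero, one_mul]
      nlinarith
    | succ N ih =>
      have h1 : |m (N + 1)| ≤ |m N| + |m (N + 1) - m N| := by
        have := abs_add_le (m N) (m (N + 1) - m N)
        simpa using this
      have hD : 1 / (1 - q) + 1 ≤ 1 / (1 - q) * q⁻¹ := by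
        rw [← sub_nonneg]
        have : 1 / (1 - q) * q⁻¹ - (1 / (1 - q) + 1) = (1 - q) / q := by
          field_simp; ring
        rw [this]; positivity
      have hX : 0 ≤ (q⁻¹) ^ N * A := by positivity
      calc |m (N + 1)| ≤ (1 / (1 - q) + 1) * ((q⁻¹) ^ N * A) := by
            have := hdA N
            linarith
        _ ≤ (1 / (1 - q) * q⁻¹) * ((q⁻¹) ^ N * A) := by gcongr
        _ = _ := by rw [pow_succ]; ring
  have hhigh : ∀ N, |m N - l| ≤ q ^ N * B / (1 - q) := by
    intro N
    have := dist_le_of_le_geometric_of_tendsto (r := q) (C := B) (f := m) hq1 (fun n => by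
      rw [dist_comm, Real.dist_eq, mul_comm]; exact hdB n) hlim N
    rw [Real.dist_eq] at this
    rwa [mul_comm (q ^ N)]
  have hl : ∀ N, |l| ≤ 1 / (1 - q) * ((q⁻¹) ^ N * A + q ^ N * B) := by
    intro N
    have h1 : |l| ≤ |m N| + |m N - l| := by
      have := abs_sub (m N) (m N - l)
      simpa using this
    have h2 := hlow N
    have h3 := hhigh N
    rw [mul_add, one_div_mul_eq_div (1 - q) (q ^ N * B)]
    linarith
  rcases hA.eq_or_lt with rfl | hA'
  · have ht : Filter.Tendsto (fun N : ℕ => 1 / (1 - q) * ((q⁻¹) ^ N * 0 + q ^ N * B))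
        Filter.atTop (nhds (1 / (1 - q) * (0 + 0 * B))) := by
      simp only [mul_zero]
      exact ((tendsto_const_nhds.add
        ((tendsto_pow_atTop_nhds_zero_of_lt_one hq0.le hq1).mul_const B))).const_mul _
    have h := ge_of_tendsto' ht hl
    have hl0 : l = 0 := by
      rw [← abs_nonpos_iff]; simpa using h
    simp [hl0]
  have hB' : 0 < B := hA'.trans_le hAB
  -- The balancing index: `q ^ (2 * n)` is comparable to `A / B`.
  obtain ⟨n, hn1, hn2⟩ := exists_nat_pow_near_of_lt_one (x := A / B) (y := q ^ 2) (by positivity)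
    ((div_le_one hB').2 hAB) (by positivity) (by nlinarith)
  rw [div_le_iff₀ hB'] at hn2
  rw [lt_div_iff₀ hB'] at hn1
  set u := (q⁻¹) ^ n * A with hu
  set v := q ^ n * B with hv
  have hqq : (q⁻¹) ^ n * q ^ n = 1 := by
    rw [← mul_pow, inv_mul_cancel₀ hq0.ne', one_pow]
  have huv : u * v = A * B := by
    calc u * v = ((q⁻¹) ^ n * q ^ n) * (A * B) := by rw [hu, hv]; ring
      _ = A * B := by rw [hqq, one_mul]
  have hu0 : 0 < u := by positivity
  have hv0 : 0 < v := by positivity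
  have huv1 : u ≤ v := by
    calc u ≤ (q⁻¹) ^ n * ((q ^ 2) ^ n * B) := by rw [hu]; gcongr
      _ = ((q⁻¹) ^ n * q ^ n) * v := by rw [hv]; ring
      _ = v := by rw [hqq, one_mul]
  have huv2 : q ^ 2 * v ≤ u := by
    calc q ^ 2 * v = ((q⁻¹) ^ n * q ^ n) * (q ^ 2 * v) := by rw [hqq, one_mul]
      _ = (q⁻¹) ^ n * ((q ^ 2) ^ (n + 1) * B) := by rw [hv]; ring
      _ ≤ u := by rw [hu]; gcongr
  have hln := hl n
  have hsum : (u + v) ^ 2 ≤ 4 / q ^ 2 * (u * v) := by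
    rw [div_mul_eq_mul_div, le_div_iff₀ (by positivity)]
    calc (u + v) ^ 2 * q ^ 2 ≤ (v + v) ^ 2 * q ^ 2 := by gcongr
      _ = 4 * ((q ^ 2 * v) * v) := by ring
      _ ≤ 4 * (u * v) := by gcongr
  calc l ^ 2 = |l| ^ 2 := (sq_abs l).symm
    _ ≤ (1 / (1 - q) * (u + v)) ^ 2 := by gcongr
    _ = (1 / (1 - q)) ^ 2 * (u + v) ^ 2 := by ring
    _ ≤ (1 / (1 - q)) ^ 2 * (4 / q ^ 2 * (u * v)) := by gcongr
    _ = _ := by rw [huv]; field_simp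

/-! ### Dyadic means at the right endpoint -/

/-- Cauchy–Schwarz against the constant function `1`. -/
lemma sq_integral_le {α : Type*} [MeasurableSpace α] (μ : Measure α) [IsFiniteMeasure μ]
    {f : α → ℝ} (hf : Integrable f μ) (hf2 : Integrable (fun x => f x ^ 2) μ) :
    (∫ x, f x ∂μ) ^ 2 ≤ μ.real univ * ∫ x, f x ^ 2 ∂μ := by
  rcases (measureReal_nonneg (μ := μ) (s := univ)).eq_or_lt with h | h
  · have : μ = 0 := by
      rw [← Measure.measure_univ_eq_zero]
      exact (measureReal_eq_zero_iff).1 h.symm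
    simp [this]
  set M := μ.real univ with hM
  set F := ∫ x, f x ∂μ with hF
  -- Expand the nonnegative integral of the squared deviation of `f` from its mean.
  have h0 : 0 ≤ ∫ x, (M * f x - F) ^ 2 ∂μ := integral_nonneg fun x => sq_nonneg _
  have h1 : ∫ x, (M * f x - F) ^ 2 ∂μ = M ^ 2 * (∫ x, f x ^ 2 ∂μ) - 2 * M * F * F + M * F ^ 2 := by
    have e : ∀ x, (M * f x - F) ^ 2 = M ^ 2 * f x ^ 2 - 2 * M * F * f x + F ^ 2 := fun x => by ring
    simp_rw [e]
    have hi : Integrable (fun x => M ^ 2 * f x ^ 2 - 2 * M * F * f x) μ :=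
      (hf2.const_mul _).sub (hf.const_mul _)
    rw [integral_add hi (integrable_const _), integral_sub (hf2.const_mul _) (hf.const_mul _), integral_const_mul, integral_const_mul,
      integral_const, smul_eq_mul]
  rw [h1] at h0
  have h2 : 0 ≤ M * (M * (∫ x, f x ^ 2 ∂μ) - F ^ 2) := by nlinarith
  have h3 := nonneg_of_mul_nonneg_right h2 h
  linarith

/-- Mean value of `ψ` over the interval `(L - r, L)`. -/
noncomputable def endMean (L : ℝ) (ψ : ℝ → ℝ) (r : ℝ) : ℝ :=
  (∫ x in Ioo (L - r) L, ψ x) / r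

/-- Off the diagonal this cancels the weight; on the diagonal both sides vanish. -/
lemma sq_sub_le_rpow_mul {ψ : ℝ → ℝ} {x y r t : ℝ} (ht : 0 ≤ t) (hxy : |x - y| ≤ r) :
    (ψ x - ψ y) ^ 2 ≤ r ^ t * ((ψ x - ψ y) ^ 2 / |x - y| ^ t) := by
  rcases eq_or_ne x y with rfl | hne
  · simp
  have h : 0 < |x - y| := abs_pos.2 (sub_ne_zero.2 hne)
  have hp : 0 < |x - y| ^ t := Real.rpow_pos_of_pos h t
  calc (ψ x - ψ y) ^ 2 = |x - y| ^ t * ((ψ x - ψ y) ^ 2 / |x - y| ^ t) := by field_simp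
    _ ≤ _ := by gcongr

/-- Halving the averaging length changes the mean by at most `r ^ (s - 1/2)` times the
Gagliardo seminorm of order `s`, up to a constant: the difference is an average of `ψ x - ψ y`
over points at distance at most `r`. -/
lemma sq_endMean_sub_le {L r s : ℝ} {ψ : ℝ → ℝ} (hs : 0 < s) (hr : 0 < r) (hrL : r ≤ L)
    (hψ : ContinuousOn ψ (Icc 0 L))
    (hint : IntegrableOn (fun p : ℝ × ℝ => (ψ p.1 - ψ p.2) ^ 2 / |p.1 - p.2| ^ (1 + 2 * s))
        ((Ioo (0:ℝ) L) ×ˢ (Ioo (0:ℝ) L))) :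
    (endMean L ψ (r / 2) - endMean L ψ r) ^ 2 ≤ 2 * r ^ (2 * s - 1) *
      ∫ p in (Ioo (0:ℝ) L) ×ˢ (Ioo (0:ℝ) L),
        ((ψ p.1 - ψ p.2) ^ 2 / |p.1 - p.2| ^ (1 + 2 * s)) := by
  set g : ℝ × ℝ → ℝ := fun p => (ψ p.1 - ψ p.2) ^ 2 / |p.1 - p.2| ^ (1 + 2 * s) with hg
  set I := Ioo (L - r) L with hI
  set J := Ioo (L - r / 2) L with hJ
  have hI0 : I ⊆ Ioo 0 L := Ioo_subset_Ioo_left (by linarith)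
  have hJ0 : J ⊆ Ioo 0 L := Ioo_subset_Ioo_left (by linarith)
  have hcI : IntegrableOn ψ I := (hψ.integrableOn_Icc).mono_set (hI0.trans Ioo_subset_Icc_self)
  have hcJ : IntegrableOn ψ J := (hψ.integrableOn_Icc).mono_set (hJ0.trans Ioo_subset_Icc_self)
  have hf1 : ContinuousOn (fun p : ℝ × ℝ => ψ p.1 - ψ p.2) (Icc 0 L ×ˢ Icc 0 L) :=
    (hψ.comp continuousOn_fst (fun p hp => hp.1)).sub
      (hψ.comp continuousOn_snd (fun p hp => hp.2))
  have hcomp : IsCompact (Icc (0:ℝ) L ×ˢ Icc (0:ℝ) L) := isCompact_Icc.prod isCompact_Icc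
  have hsubIJ : I ×ˢ J ⊆ Ioo 0 L ×ˢ Ioo 0 L := prod_mono hI0 hJ0
  have hsub : I ×ˢ J ⊆ Icc 0 L ×ˢ Icc 0 L :=
    prod_mono (hI0.trans Ioo_subset_Icc_self) (hJ0.trans Ioo_subset_Icc_self)
  have hif : IntegrableOn (fun p : ℝ × ℝ => ψ p.1 - ψ p.2) (I ×ˢ J) :=
    (hf1.integrableOn_compact hcomp).mono_set hsub
  have hif2 : IntegrableOn (fun p : ℝ × ℝ => (ψ p.1 - ψ p.2) ^ 2) (I ×ˢ J) :=
    ((hf1.pow 2).integrableOn_compact hcomp).mono_set hsub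
  have hmeas : MeasurableSet (I ×ˢ J) := measurableSet_Ioo.prod measurableSet_Ioo
  have hrestr : (volume : Measure (ℝ × ℝ)).restrict (I ×ˢ J)
      = (volume.restrict I).prod (volume.restrict J) := by
    rw [Measure.prod_restrict]; rfl
  have hvI : (volume.restrict I).real univ = r := by
    simp [hI, Measure.real, hr.le]
  have hvJ : (volume.restrict J).real univ = r / 2 := by
    simp [hJ, Measure.real]; positivity
  have : IsFiniteMeasure (volume.restrict I) := ⟨by simp [hI]⟩
  have : IsFiniteMeasure (volume.restrict J) := ⟨by simp [hJ]⟩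
  have hF : ∫ p in I ×ˢ J, (ψ p.1 - ψ p.2)
      = r ^ 2 / 2 * (endMean L ψ r - endMean L ψ (r / 2)) := by
    rw [hrestr, integral_sub (hcI.comp_fst _) (hcJ.comp_snd _), integral_fun_fst ψ,
      integral_fun_snd ψ, hvI, hvJ, endMean, endMean, ← hI, ← hJ, smul_eq_mul, smul_eq_mul]
    field_simp
  have hvol : (volume.restrict (I ×ˢ J)).real univ = r ^ 2 / 2 := by
    rw [hrestr, ← univ_prod_univ, measureReal_prod_prod, hvI, hvJ]; ring
  have : IsFiniteMeasure ((volume : Measure (ℝ × ℝ)).restrict (I ×ˢ J)) := by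
    rw [hrestr]; infer_instance
  have hcs := sq_integral_le _ hif hif2
  rw [hF, hvol] at hcs
  have hle : ∫ p in I ×ˢ J, (ψ p.1 - ψ p.2) ^ 2 ≤ r ^ (1 + 2 * s) *
      ∫ p in Ioo 0 L ×ˢ Ioo 0 L, g p := by
    calc ∫ p in I ×ˢ J, (ψ p.1 - ψ p.2) ^ 2 ≤ ∫ p in I ×ˢ J, r ^ (1 + 2 * s) * g p := by
          refine setIntegral_mono_on hif2 ((hint.mono_set hsubIJ).const_mul _) hmeas ?_
          rintro ⟨x, y⟩ ⟨hx, hy⟩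
          refine sq_sub_le_rpow_mul (by linarith) ?_
          simp only [hI, hJ, mem_Ioo] at hx hy
          rw [abs_le]; constructor <;> linarith
      _ = r ^ (1 + 2 * s) * ∫ p in I ×ˢ J, g p := integral_const_mul _ _
      _ ≤ _ := by
          refine mul_le_mul_of_nonneg_left ?_ (by positivity)
          refine setIntegral_mono_set hint (ae_of_all _ fun p => ?_) hsubIJ.eventuallyLE
          simp only [hg, Pi.zero_apply]; positivity
  have hpow : r ^ (1 + 2 * s) = r ^ (2 * s - 1) * r ^ 2 := by
    rw [← Real.rpow_natCast r 2, ← Real.rpow_add hr]; congr 1; push_cast; ring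
  rw [hpow] at hle
  have h2 : (r ^ 2 / 2) * (r ^ 2 / 2) * (endMean L ψ (r / 2) - endMean L ψ r) ^ 2
      ≤ (r ^ 2 / 2) * (r ^ 2 / 2) * (2 * r ^ (2 * s - 1) * ∫ p in Ioo 0 L ×ˢ Ioo 0 L, g p) := by
    calc _ = (r ^ 2 / 2 * (endMean L ψ r - endMean L ψ (r / 2))) ^ 2 := by ring
      _ ≤ _ := hcs
      _ ≤ r ^ 2 / 2 * (r ^ (2 * s - 1) * r ^ 2 * ∫ p in Ioo 0 L ×ˢ Ioo 0 L, g p) := by gcongr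
      _ = _ := by ring
  exact le_of_mul_le_mul_left h2 (by positivity)

lemma tendsto_endMean {L : ℝ} {ψ : ℝ → ℝ} (hL : 0 < L) (hψ : ContinuousOn ψ (Icc 0 L)) :
    Filter.Tendsto (fun k : ℕ => endMean L ψ (L * (1 / 2) ^ k)) Filter.atTop (nhds (ψ L)) := by
  have hr : Filter.Tendsto (fun k : ℕ => L * (1 / 2 : ℝ) ^ k) Filter.atTop (nhds (L * 0)) :=
    (tendsto_pow_atTop_nhds_zero_of_lt_one (by norm_num) (by norm_num)).const_mul L
  rw [mul_zero] at hr
  rw [Metric.tendsto_atTop']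
  intro e he
  obtain ⟨d, hd, hd'⟩ := Metric.continuousWithinAt_iff.1 (hψ L ⟨hL.le, le_rfl⟩) (e / 2)
    (by positivity)
  obtain ⟨N, hN⟩ := Filter.eventually_atTop.1 (hr.eventually (gt_mem_nhds hd))
  refine ⟨N, fun n hn => ?_⟩
  have hrd := hN n hn.le
  set r := L * (1 / 2 : ℝ) ^ n with hrdef
  have hr0 : 0 < r := by positivity
  have hrL : r ≤ L := mul_le_of_le_one_right hL.le (pow_le_one₀ (by norm_num) (by norm_num))
  have hsub : Ioo (L - r) L ⊆ Icc 0 L := fun x hx => ⟨by linarith [hx.1], hx.2.le⟩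
  have hi : IntegrableOn ψ (Ioo (L - r) L) := hψ.integrableOn_Icc.mono_set hsub
  have hv : volume.real (Ioo (L - r) L) = r := by simp [Measure.real, hr0.le]
  have hb : ‖∫ x in Ioo (L - r) L, (ψ x - ψ L)‖ ≤ e / 2 * volume.real (Ioo (L - r) L) := by
    refine norm_setIntegral_le_of_norm_le_const (by simp) fun x hx => ?_
    have := hd' (hsub hx) (by
      rw [Real.dist_eq, abs_lt]; constructor <;> linarith [hx.1, hx.2])
    rw [Real.dist_eq] at this
    exact this.le
  rw [integral_sub hi (integrableOn_const (by simp)), setIntegral_const, hv, smul_eq_mul,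
    Real.norm_eq_abs] at hb
  have heq : endMean L ψ r - ψ L = ((∫ x in Ioo (L - r) L, ψ x) - r * ψ L) / r := by
    rw [endMean]; field_simp
  rw [Real.dist_eq, heq, abs_div, abs_of_pos hr0, div_lt_iff₀ hr0]
  nlinarith

/-! ### The trace estimate -/

/-- Interpolation trace estimate: for `0 < ε < 1/2` and `ψ ∈ H^{1−ε} ∩ H^ε(0, L₀)`
with `ψ(0) = 0`, one has `ψ(L₀)² ≤ c‖ψ‖_{H^{1−ε}}‖ψ‖_{H^ε} ≤ c‖ψ‖²_{H^{1−ε}}`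
with `c` independent of `ψ`. -/
theorem stmt3 (L₀ ε : ℝ) (hL : 0 < L₀) (hε1 : 0 < ε) (hε2 : ε < 1/2) :
    ∃ c > 0, ∀ ψ : ℝ → ℝ, ContinuousOn ψ (Icc 0 L₀) → ψ 0 = 0 →
      IntegrableOn (fun p : ℝ × ℝ => (ψ p.1 - ψ p.2) ^ 2 / |p.1 - p.2| ^ (1 + 2 * (1 - ε)))
        ((Ioo (0:ℝ) L₀) ×ˢ (Ioo (0:ℝ) L₀)) →
      IntegrableOn (fun p : ℝ × ℝ => (ψ p.1 - ψ p.2) ^ 2 / |p.1 - p.2| ^ (1 + 2 * ε))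
        ((Ioo (0:ℝ) L₀) ×ˢ (Ioo (0:ℝ) L₀)) →
      (ψ L₀) ^ 2 ≤ c * Real.sqrt (sobNormSq (1 - ε) L₀ ψ) * Real.sqrt (sobNormSq ε L₀ ψ) ∧
      (ψ L₀) ^ 2 ≤ c * sobNormSq (1 - ε) L₀ ψ := by
  set q : ℝ := (1 / 2 : ℝ) ^ ((1 - 2 * ε) / 2) with hq
  have hq0 : 0 < q := by positivity
  have hq1 : q < 1 := Real.rpow_lt_one (by norm_num) (by norm_num) (by linarith)
  -- `T` bounds the squared `H^ε` norm by the squared `H^{1-ε}` norm. In `a`, `1 / L₀` pays for the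
  -- mean over the whole interval and the power for the increments at order `ε`; in `b` the power
  -- pays for the increments at order `1 - ε`, with `a * T` added so that the `ε` bound never exceeds the `1 - ε` bound.
  set T : ℝ := 1 + L₀ ^ (2 - 4 * ε) with hT
  set a : ℝ := 1 / L₀ + 2 * L₀ ^ (2 * ε - 1) with ha
  set b : ℝ := 2 * L₀ ^ (1 - 2 * ε) + a * T with hb
  have hT0 : 0 < T := by positivity
  have hT1 : 1 ≤ T := by rw [hT]; linarith [Real.rpow_nonneg hL.le (2 - 4 * ε)]
  have ha0 : 0 < a := by positivity
  have hb0 : 0 < b := by positivity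
  set c₀ : ℝ := 4 / ((1 - q) ^ 2 * q ^ 2) * (√a * √b) with hc₀
  have h1q : 0 < 1 - q := by linarith
  have hc₀0 : 0 < c₀ := by positivity
  refine ⟨c₀ * T, by positivity, fun ψ hψ _ hi1 hi2 => ?_⟩
  set P : ℝ := ∫ x in (0:ℝ)..L₀, (ψ x) ^ 2 with hP
  set G : ℝ → ℝ := fun s => ∫ p in (Ioo (0:ℝ) L₀) ×ˢ (Ioo (0:ℝ) L₀),
      ((ψ p.1 - ψ p.2) ^ 2 / |p.1 - p.2| ^ (1 + 2 * s)) with hG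
  have hS : ∀ s, sobNormSq s L₀ ψ = P + G s := fun s => rfl
  have hP0 : 0 ≤ P := intervalIntegral.integral_nonneg hL.le fun x _ => sq_nonneg _
  have hG0 : ∀ s, 0 ≤ G s := fun s => integral_nonneg fun p => by
    simp only [Pi.zero_apply]; positivity
  set S₀ := sobNormSq ε L₀ ψ with hS₀
  set S₁ := sobNormSq (1 - ε) L₀ ψ with hS₁
  have hGle : G ε ≤ L₀ ^ (2 - 4 * ε) * G (1 - ε) := by
    simp only [hG]
    rw [← integral_const_mul]
    refine setIntegral_mono_on hi2 (hi1.const_mul _) (measurableSet_Ioo.prod measurableSet_Ioo) ?_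
    rintro ⟨x, y⟩ ⟨hx, hy⟩
    simp only [mem_Ioo] at hx hy
    simp only
    rcases eq_or_ne x y with rfl | hne
    · simp
    have h : 0 < |x - y| := abs_pos.2 (sub_ne_zero.2 hne)
    have hxy : |x - y| ≤ L₀ := by rw [abs_le]; constructor <;> linarith
    have hsplit : |x - y| ^ (1 + 2 * (1 - ε)) = |x - y| ^ (1 + 2 * ε) * |x - y| ^ (2 - 4 * ε) := by
      rw [← Real.rpow_add h]; congr 1; ring
    have hp1 : 0 < |x - y| ^ (1 + 2 * ε) := by positivity
    have hp2 : 0 < |x - y| ^ (2 - 4 * ε) := by positivity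
    calc (ψ x - ψ y) ^ 2 / |x - y| ^ (1 + 2 * ε)
        = |x - y| ^ (2 - 4 * ε) * ((ψ x - ψ y) ^ 2 / |x - y| ^ (1 + 2 * (1 - ε))) := by
          rw [hsplit]; field_simp
      _ ≤ _ := by
          gcongr
          linarith
  have hSle : S₀ ≤ T * S₁ := by
    rw [hS₀, hS₁, hS, hS, hT]
    nlinarith [hG0 (1 - ε), Real.rpow_nonneg hL.le (2 - 4 * ε)]
  have hS₀0 : 0 ≤ S₀ := add_nonneg hP0 (hG0 ε)
  have hS₁0 : 0 ≤ S₁ := add_nonneg hP0 (hG0 (1 - ε))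
  have hq2 : ∀ k : ℕ, ((1 / 2 : ℝ) ^ k) ^ (1 - 2 * ε) = (q ^ k) ^ 2 := by
    intro k
    rw [hq, ← pow_mul, mul_comm k 2, pow_mul, ← Real.rpow_natCast (_ ^ ((1 - 2 * ε) / 2)) 2,
      ← Real.rpow_mul (by norm_num), Real.rpow_pow_comm (by norm_num)]
    congr 2; push_cast; ring
  set m : ℕ → ℝ := fun k => endMean L₀ ψ (L₀ * (1 / 2) ^ k) with hm
  have hstep : ∀ s, 0 < s → IntegrableOn (fun p : ℝ × ℝ =>
      (ψ p.1 - ψ p.2) ^ 2 / |p.1 - p.2| ^ (1 + 2 * s)) ((Ioo (0:ℝ) L₀) ×ˢ (Ioo (0:ℝ) L₀)) →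
      ∀ k, (m (k + 1) - m k) ^ 2 ≤
        2 * (L₀ ^ (2 * s - 1) * ((1 / 2 : ℝ) ^ k) ^ (2 * s - 1)) * G s := by
    intro s hs hi k
    have := sq_endMean_sub_le (r := L₀ * (1 / 2) ^ k) hs (by positivity)
      (mul_le_of_le_one_right hL.le (pow_le_one₀ (by norm_num) (by norm_num))) hψ hi
    rw [Real.mul_rpow hL.le (by positivity)] at this
    simp only [hm]
    rwa [show L₀ * (1 / 2 : ℝ) ^ (k + 1) = L₀ * (1 / 2) ^ k / 2 by ring]
  have hseq := sq_limit_le_of_increments (q := q) (A := √(a * S₀)) (B := √(b * S₁)) (m := m)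
    (l := ψ L₀) hq0 hq1 (Real.sqrt_nonneg _) ?_ ?_ ?_ ?_ (tendsto_endMean hL hψ)
  · rw [Real.sqrt_mul ha0.le, Real.sqrt_mul hb0.le] at hseq
    have hseq' : ψ L₀ ^ 2 ≤ c₀ * (√S₁ * √S₀) := by
      rw [hc₀]; linarith
    have hc : c₀ ≤ c₀ * T := le_mul_of_one_le_right hc₀0.le hT1
    refine ⟨?_, ?_⟩
    · refine hseq'.trans ?_
      rw [mul_assoc (c₀ * T)]
      exact mul_le_mul_of_nonneg_right hc (by positivity)
    · have h1 : √S₀ ≤ T * √S₁ := by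
        rw [Real.sqrt_le_left (by positivity), mul_pow, Real.sq_sqrt hS₁0]
        nlinarith
      calc ψ L₀ ^ 2 ≤ c₀ * (√S₁ * √S₀) := hseq'
        _ ≤ c₀ * (√S₁ * (T * √S₁)) := by gcongr
        _ = c₀ * T * (√S₁ * √S₁) := by ring
        _ = c₀ * T * S₁ := by rw [Real.mul_self_sqrt hS₁0]
  · apply Real.sqrt_le_sqrt
    calc a * S₀ ≤ a * (T * S₁) := by gcongr
      _ = (a * T) * S₁ := by ring
      _ ≤ b * S₁ := by
        gcongr
        rw [hb]
        linarith [Real.rpow_nonneg hL.le (1 - 2 * ε)]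
  · apply Real.abs_le_sqrt
    have hc2 : IntegrableOn (fun x => ψ x ^ 2) (Ioo 0 L₀) :=
      (hψ.pow 2).integrableOn_Icc.mono_set Ioo_subset_Icc_self
    have hc1 : IntegrableOn ψ (Ioo 0 L₀) := hψ.integrableOn_Icc.mono_set Ioo_subset_Icc_self
    have : IsFiniteMeasure (volume.restrict (Ioo 0 L₀)) := ⟨by simp⟩
    have hcs := sq_integral_le _ hc1 hc2
    have hv : (volume.restrict (Ioo 0 L₀)).real univ = L₀ := by simp [Measure.real, hL.le]
    have hP' : ∫ x in Ioo 0 L₀, ψ x ^ 2 = P := by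
      rw [hP, intervalIntegral.integral_of_le hL.le, integral_Ioc_eq_integral_Ioo]
    rw [hv, hP'] at hcs
    have hm0 : m 0 = (∫ x in Ioo 0 L₀, ψ x) / L₀ := by simp [hm, endMean]
    rw [hm0, div_pow]
    calc (∫ x in Ioo 0 L₀, ψ x) ^ 2 / L₀ ^ 2 ≤ L₀ * P / L₀ ^ 2 := by gcongr
      _ = 1 / L₀ * P := by field_simp
      _ ≤ a * S₀ := by
        gcongr
        · rw [ha]; linarith [Real.rpow_nonneg hL.le (2 * ε - 1)]
        · rw [hS₀, hS]; linarith [hG0 ε]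
  · intro k
    rw [← Real.sqrt_sq (show 0 ≤ (q⁻¹) ^ k by positivity), ← Real.sqrt_mul (sq_nonneg _)]
    apply Real.abs_le_sqrt
    refine (hstep ε hε1 hi2 k).trans ?_
    have : ((1 / 2 : ℝ) ^ k) ^ (2 * ε - 1) = ((q⁻¹) ^ k) ^ 2 := by
      rw [show 2 * ε - 1 = -(1 - 2 * ε) by ring, Real.rpow_neg (by positivity), hq2, inv_pow,
        inv_pow]
    rw [this]
    calc _ = ((q⁻¹) ^ k) ^ 2 * ((2 * L₀ ^ (2 * ε - 1)) * G ε) := by ring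
      _ ≤ _ := by
        gcongr
        · have : 0 < 1 / L₀ := by positivity
          rw [ha]; linarith
        · rw [hS₀, hS]; linarith
  · intro k
    rw [← Real.sqrt_sq (show 0 ≤ q ^ k by positivity), ← Real.sqrt_mul (sq_nonneg _)]
    apply Real.abs_le_sqrt
    refine (hstep (1 - ε) (by linarith) hi1 k).trans ?_
    rw [show 2 * (1 - ε) - 1 = 1 - 2 * ε by ring, hq2]
    calc _ = (q ^ k) ^ 2 * ((2 * L₀ ^ (1 - 2 * ε)) * G (1 - ε)) := by ring
      _ ≤ _ := by
        gcongr
        · have : 0 < a * T := by positivity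
          rw [hb]; linarith
        · rw [hS₁, hS]; linarith
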